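/- Let a be a semi-integer (2a ∈ ℤ, a ≠ 0) and let π : V^a → ℂ^n be the projection π(r, z, Δ_0, m) = m. Then there exists a Zariski-closed proper subset B̃ ⊊ ℂ^n such that for every m ∈ ℂ^n \ B̃ the fibre π^{−1}(m) = {(r, z, Δ_0) : (r, z, Δ_0, m) ∈ V^a} is a finite set. -/

import Mathlib

/-- Index type for the mutual-distance variables `R_{ij}`, `1 ≤ i < j ≤ n`. -/
abbrev PairIdx (n : ℕ) := {p : Fin n × Fin n // p.1 < p.2}

/-- The polynomial `R_{ij}` (for an unordered pair `{i,j}`; junk value `0` if `i = j`). -/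
noncomputable def Rvar {n : ℕ} (i j : Fin n) : MvPolynomial (PairIdx n) ℂ :=
  if h : i < j then MvPolynomial.X ⟨(i, j), h⟩
  else if h' : j < i then MvPolynomial.X ⟨(j, i), h'⟩ else 0

/-- The polynomial Cayley–Menger matrix `A(R)` over `ℂ[R_{12}, …, R_{(n−1)n}]`. -/
noncomputable def cmPolyMatrix (n : ℕ) :
    Matrix (Fin (n + 1)) (Fin (n + 1)) (MvPolynomial (PairIdx n) ℂ) :=
  Matrix.of fun i j =>
    Fin.cases (Fin.cases 0 (fun _ => 1) j)
      (fun i' => Fin.cases 1 (fun j' => Rvar i' j' ^ 2) j) i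

/-- The Cayley–Menger determinant polynomial `F = det A(R)`. -/
noncomputable def Fpoly (n : ℕ) : MvPolynomial (PairIdx n) ℂ := (cmPolyMatrix n).det

/-- `∂F/∂R_{ij}` for an unordered pair `{i,j}` (junk value `0` if `i = j`). -/
noncomputable def dF {n : ℕ} (i j : Fin n) : MvPolynomial (PairIdx n) ℂ :=
  if h : i < j then MvPolynomial.pderiv (⟨(i, j), h⟩ : PairIdx n) (Fpoly n)
  else if h' : j < i then MvPolynomial.pderiv (⟨(j, i), h'⟩ : PairIdx n) (Fpoly n) else 0

/-- `(∂F/∂R_{ij})` evaluated at `r`. -/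
noncomputable def evalDF {n : ℕ} (r : PairIdx n → ℂ) (i j : Fin n) : ℂ :=
  MvPolynomial.eval r (dF i j)

/-- `r_{ij}` as a symmetric function of the coordinates indexed by ordered pairs. -/
noncomputable def rC {n : ℕ} (r : PairIdx n → ℂ) (i j : Fin n) : ℂ :=
  if h : i < j then r ⟨(i, j), h⟩ else if h' : j < i then r ⟨(j, i), h'⟩ else 0

/-- The numeric Cayley–Menger matrix `A(r²)` of the numbers `r_{ij}`. -/
noncomputable def cmOf {n : ℕ} (r : PairIdx n → ℂ) :
    Matrix (Fin (n + 1)) (Fin (n + 1)) ℂ :=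
  Matrix.of fun i j =>
    Fin.cases (Fin.cases 0 (fun _ => 1) j)
      (fun i' => Fin.cases 1 (fun j' => rC r i' j' ^ 2) j) i

/-- `Ψ^a_i` evaluated at a point (with `c2 = 2a`): for `a < 0`,
`∑_{j≠i} r_{ij}^{−2a+1} (∂F/∂R_{ij})(r) z_j`; for `a > 0`,
`∑_{j≠i} (∏_{(k,l)≠(i,j)} r_{kl}^{2a−1}) (∂F/∂R_{ij})(r) z_j`. -/
noncomputable def Psi {n : ℕ} (c2 : ℤ) (r : PairIdx n → ℂ) (z : Fin n → ℂ) (i : Fin n) : ℂ :=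
  if c2 < 0 then
    ∑ j ∈ Finset.univ \ {i}, rC r i j ^ (1 - c2).toNat * evalDF r i j * z j
  else
    ∑ j ∈ Finset.univ \ {i},
      (∏ p ∈ Finset.univ.filter
          (fun p : PairIdx n => ¬((p.1.1 = i ∧ p.1.2 = j) ∨ (p.1.1 = j ∧ p.1.2 = i))),
        r p ^ (c2 - 1).toNat) * evalDF r i j * z j

/-- The coordinates of the affine space `ℂ^{q+2n+1}`: `R`-coordinates, `Z`-coordinates,
the coordinate `Δ`, and `M`-coordinates. -/
abbrev TVar (n : ℕ) := PairIdx n ⊕ (Fin n ⊕ (Unit ⊕ Fin n))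

/-- A point of `ℂ^{q+2n+1}`. -/
abbrev Pt (n : ℕ) := TVar n → ℂ

def rPart {n : ℕ} (P : Pt n) : PairIdx n → ℂ := fun p => P (Sum.inl p)
def zPart {n : ℕ} (P : Pt n) : Fin n → ℂ := fun i => P (Sum.inr (Sum.inl i))
def dPart {n : ℕ} (P : Pt n) : ℂ := P (Sum.inr (Sum.inr (Sum.inl ())))
def mPart {n : ℕ} (P : Pt n) : Fin n → ℂ := fun i => P (Sum.inr (Sum.inr (Sum.inr i)))

/-- `g^a_{ij}` evaluated at a point: `R_{ij}^{2a} − 1 − Z_i Z_j` if `a > 0`, and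
`R_{ij}^{−2a}(Z_i Z_j + 1) − 1` if `a < 0` (with `c2 = 2a`). -/
noncomputable def gEval {n : ℕ} (c2 : ℤ) (P : Pt n) (p : PairIdx n) : ℂ :=
  if 0 < c2 then rPart P p ^ c2.toNat - 1 - zPart P p.1.1 * zPart P p.1.2
  else rPart P p ^ (-c2).toNat * (zPart P p.1.1 * zPart P p.1.2 + 1) - 1

/-- `Γ_l` evaluated at a point: `Γ_0 = ∑ M_j Z_j` and
`Γ_l = Δ + ∑ M_j Z_j R_{jl}²` for `l = 1, …, n`. -/
noncomputable def GammaEval {n : ℕ} (P : Pt n) (l : Fin (n + 1)) : ℂ :=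
  Fin.cases (∑ j, mPart P j * zPart P j)
    (fun l' => dPart P + ∑ j, mPart P j * zPart P j * rC (rPart P) j l' ^ 2) l

/-- The algebraic set `Ṽ^a`: common zero set of the `g^a_{ij}`, `F`, and the `Γ_l`. -/
noncomputable def Vtilde (n : ℕ) (c2 : ℤ) : Set (Pt n) :=
  {P | (∀ p, gEval c2 P p = 0) ∧ (cmOf (rPart P)).det = 0 ∧ ∀ l, GammaEval P l = 0}

/-- `W_1 = {∏_{i<j} R_{ij} = 0}`. -/
noncomputable def W1 (n : ℕ) : Set (Pt n) := {P | ∏ p, rPart P p = 0}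

/-- `W_2 = {F_{ij} = 0 for all 0 ≤ i, j ≤ n}` (the `(i,j)` cofactor of the Cayley–Menger
matrix is the `(j,i)` entry of its adjugate). -/
noncomputable def W2 (n : ℕ) : Set (Pt n) :=
  {P | ∀ i j : Fin (n + 1), (cmOf (rPart P)).adjugate j i = 0}

/-- `W_3^a = {Ψ^a_1 = ⋯ = Ψ^a_n = 0}`. -/
noncomputable def W3 (n : ℕ) (c2 : ℤ) : Set (Pt n) :=
  {P | ∀ i, Psi c2 (rPart P) (zPart P) i = 0}

/-- The quasi-affine set `V^a = Ṽ^a \ (W_1 ∪ W_2 ∪ W_3^a)`. -/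
noncomputable def Vset (n : ℕ) (c2 : ℤ) : Set (Pt n) :=
  Vtilde n c2 \ (W1 n ∪ W2 n ∪ W3 n c2)

/-- A subset of affine space `ℂ^σ` is Zariski-closed if it is the common zero set of a
collection of polynomials. -/
def IsZClosed {σ : Type} (S : Set (σ → ℂ)) : Prop :=
  ∃ T : Set (MvPolynomial σ ℂ), S = {x | ∀ f ∈ T, MvPolynomial.eval x f = 0}

/-!
Work at the generic point of an irreducible component of the closure of `V^a`. If the masses are
algebraically dependent there, a polynomial relation between them keeps the generic fibre away from
this component. Otherwise no mass vanishes, and the equations `Γ_l = 0` say that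
`(Δ_0, m_1 z_1, …, m_n z_n)` lies in the kernel of the Cayley–Menger matrix. Some cofactor is
nonzero, so this kernel is a line spanned by a column of the adjugate; as the distances are
algebraic over the `z_j`, so are the masses with `z_j ≠ 0`, up to one proportionality factor. If the
nonzero `z_j` were algebraically independent, then each `∂/∂z_i` would be a derivation of the
function field, and applying it to `F = 0` would give `Ψ_i = 0`, contradicting nondegeneracy. So
if `s` of the `z_j` are nonzero, then the corresponding `s` masses are independent and algebraic
over `s` dependent elements together with the proportionality factor, and the exchange property
makes all coordinates algebraic over the masses. Over every mass vector at which the leading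
coefficients of the resulting polynomial equations do not vanish, each coordinate takes finitely
many values.
-/

open MvPolynomial

section Derivations

theorem derivation_prod {R A ι : Type*} [CommSemiring R] [CommRing A] [Algebra R A]
    [DecidableEq ι] (D : Derivation R A A) (s : Finset ι) (f : ι → A) :
    D (∏ i ∈ s, f i) = ∑ i ∈ s, (∏ k ∈ s.erase i, f k) * D (f i) := by
  induction s using Finset.induction_on with
  | empty => simp
  | insert a s ha ih =>
    rw [Finset.prod_insert ha, Derivation.leibniz, ih, Finset.sum_insert ha,
      Finset.erase_insert ha, smul_eq_mul, smul_eq_mul, Finset.mul_sum, add_comm]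
    congr 1
    refine Finset.sum_congr rfl fun i hi => ?_
    have hne : a ≠ i := fun h => ha (h ▸ hi)
    rw [Finset.erase_insert_of_ne hne, Finset.prod_insert (by simp [ha]), mul_assoc]

theorem derivation_det {R A ι : Type*} [CommSemiring R] [CommRing A] [Algebra R A] [DecidableEq ι]
    [Fintype ι] (D : Derivation R A A) (M : Matrix ι ι A) :
    D M.det = ∑ i, ∑ j, M.adjugate i j * D (M j i) := by
  have sum_eq_det (i : ι) :
      ∑ j, M.adjugate i j * D (M j i) = (M.updateCol i (fun j => D (M j i))).det := by
    rw [← Matrix.cramer_apply, Matrix.cramer_eq_adjugate_mulVec]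
    rfl
  simp_rw [sum_eq_det, Matrix.det_apply, map_sum]
  rw [Finset.sum_comm]
  refine Finset.sum_congr rfl fun σ _ => ?_
  rw [← Finset.smul_sum, Units.smul_def, Units.smul_def, map_zsmul, derivation_prod]
  congr 1
  refine Finset.sum_congr rfl fun i _ => ?_
  rw [← Finset.mul_prod_erase Finset.univ _ (Finset.mem_univ i), mul_comm, Matrix.updateCol_self]
  congr 1
  exact Finset.prod_congr rfl fun k hk => by
    rw [Matrix.updateCol_ne (Finset.ne_of_mem_erase hk)]

theorem exists_derivation_extending_of_formallyEtale {R S T : Type*} [CommRing R] [CommRing S]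
    [CommRing T] [Algebra R S] [Algebra R T] [Algebra S T] [IsScalarTower R S T]
    [Algebra.FormallyEtale S T] (d : Derivation R S T) :
    ∃ D : Derivation R T T, ∀ s, D (algebraMap S T s) = d s := by
  let e := KaehlerDifferential.tensorKaehlerEquivOfFormallyEtale R S T
  let φ := d.liftKaehlerDifferential.liftBaseChange T ∘ₗ e.symm.toLinearMap
  refine ⟨φ.compDer (KaehlerDifferential.D R T), fun s => ?_⟩
  simp [φ, e, KaehlerDifferential.tensorKaehlerEquivOfFormallyEtale_symm_D_algebraMap]

variable {k L ι : Type*} [Field k] [CharZero k] [Field L] [Algebra k L] {x : ι → L}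

theorem formallyEtale_mvPolynomial_of_isTranscendenceBasis (hx : IsTranscendenceBasis k x) :
    letI : Algebra (MvPolynomial ι k) L := (aeval x).toAlgebra
    Algebra.FormallyEtale (MvPolynomial ι k) L := by
  let P := MvPolynomial ι k
  let _ : Algebra P L := (aeval x).toAlgebra
  have : FaithfulSMul P L := (faithfulSMul_iff_algebraMap_injective _ _).2 hx.1
  let _ : Algebra (FractionRing P) L := FractionRing.liftAlgebra P L
  have algebraic_adjoin : Algebra.IsAlgebraic (Algebra.adjoin k (Set.range x)) L := hx.isAlgebraic
  have : Algebra.IsAlgebraic P L :=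
    Algebra.IsAlgebraic.of_ringHom_of_comp_eq (R := P) (A := L) hx.1.aevalEquiv.toRingEquiv
      (RingHom.id L) hx.1.aevalEquiv.surjective Function.injective_id rfl
  have : Algebra.IsAlgebraic (FractionRing P) L :=
    (IsFractionRing.comap_isAlgebraic_iff (A := P)).1 this
  have : Algebra.FormallyEtale P (FractionRing P) := .of_isLocalization (nonZeroDivisors P)
  have : Algebra.FormallyEtale (FractionRing P) L := .of_isSeparable _ _
  exact .comp P (FractionRing P) L

theorem exists_derivation_apply_eq_of_algebraicIndependent (hx : AlgebraicIndependent k x)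
    (f : ι → L) : ∃ D : Derivation k L L, ∀ j, D (x j) = f j := by
  obtain ⟨t, hxt, ht⟩ := exists_isTranscendenceBasis_superset hx.coe_range
  let _ : Algebra (MvPolynomial t k) L := (aeval ((↑) : t → L)).toAlgebra
  have : IsScalarTower k (MvPolynomial t k) L := .of_algebraMap_eq fun c => by
    simp [RingHom.algebraMap_toAlgebra]
  have : Algebra.FormallyEtale (MvPolynomial t k) L :=
    formallyEtale_mvPolynomial_of_isTranscendenceBasis ht
  obtain ⟨D, hD⟩ := exists_derivation_extending_of_formallyEtale
    (mkDerivation k (Function.extend (fun j => (⟨x j, hxt ⟨j, rfl⟩⟩ : t)) f 0))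
  refine ⟨D, fun j => ?_⟩
  have inj : Function.Injective fun j => (⟨x j, hxt ⟨j, rfl⟩⟩ : t) :=
    fun i j h => hx.injective (congrArg Subtype.val h)
  have x_eq : x j = algebraMap (MvPolynomial t k) L (X ⟨x j, hxt ⟨j, rfl⟩⟩) := by
    simp [RingHom.algebraMap_toAlgebra]
  rw [x_eq, hD, mkDerivation_X]
  exact inj.extend_apply f 0 j

end Derivations

section Adjugate

variable {K ι : Type*} [Field K] [Fintype ι] [DecidableEq ι] {A : Matrix ι ι K} {u : ι → K}

theorem exists_eq_mul_adjugate_of_mulVec_eq_zero (hA : A.det = 0) (hu : A.mulVec u = 0) {a b : ι}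
    (hab : A.adjugate a b ≠ 0) : ∃ c, ∀ i, u i = c * A.adjugate i b := by
  let c := u a / A.adjugate a b
  let w : ι → K := u - c • A.adjugate.col b
  have adjugate_col : A.mulVec (A.adjugate.col b) = 0 := by
    have mul_adjugate : A * A.adjugate = 0 := by rw [A.mul_adjugate, hA, zero_smul]
    exact funext fun i => congrFun (congrFun mul_adjugate i) b
  have hAw : A.mulVec w = 0 := by
    rw [Matrix.mulVec_sub, Matrix.mulVec_smul, hu, adjugate_col, smul_zero, sub_zero]
  have hwa : w a = 0 := by simp [w, c, hab]
  have hw : w = 0 := by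
    refine Matrix.eq_zero_of_mulVec_eq_zero (M := A.updateRow b (Pi.single a 1))
      (by rwa [← Matrix.adjugate_apply]) (funext fun i => ?_)
    rcases eq_or_ne i b with rfl | hib
    · simp [Matrix.mulVec, hwa]
    · simpa [Matrix.mulVec, Matrix.updateRow_ne hib] using congrFun hAw i
  exact ⟨c, fun i => sub_eq_zero.1 (congrFun hw i)⟩

theorem adjugate_apply_eq_zero_of_mulVec_eq_zero (hA : A.det = 0) (hu : A.mulVec u = 0)
    (hu0 : u ≠ 0) {i : ι} (hi : u i = 0) (j : ι) : A.adjugate i j = 0 := by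
  by_contra hij
  obtain ⟨c, hc⟩ := exists_eq_mul_adjugate_of_mulVec_eq_zero hA hu hij
  have hc0 : c = 0 := (mul_eq_zero.1 ((hc i).symm.trans hi)).resolve_right hij
  exact hu0 (funext fun l => by simp [hc l, hc0])

end Adjugate

theorem isAlgebraic_adjugate_apply {R S ι : Type*} [CommRing R] [IsDomain R] [CommRing S]
    [Algebra R S] [Fintype ι] [DecidableEq ι] {M : Matrix ι ι S}
    (hM : ∀ i j, IsAlgebraic R (M i j)) (i j : ι) : IsAlgebraic R (M.adjugate i j) := by
  let C := Subalgebra.algebraicClosure R S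
  let N : Matrix ι ι C := fun i j => ⟨M i j, hM i j⟩
  have hN : (C.val : C →+* S).mapMatrix N.adjugate = M.adjugate := by
    rw [RingHom.map_adjugate]
    rfl
  rw [← hN]
  exact (N.adjugate i j).2

section Transcendence

variable {k L ι : Type*} [Field k] [Field L] [Algebra k L]

theorem mem_closure_matroid_iff {s : Set L} {x : L} :
    x ∈ (AlgebraicIndependent.matroid k L).closure s ↔ IsAlgebraic (Algebra.adjoin k s) x := by
  simp [AlgebraicIndependent.matroid_closure_eq, Subalgebra.mem_algebraicClosure]

theorem isAlgebraic_adjoin_of_mem {s : Set L} {x : L} (hx : x ∈ s) :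
    IsAlgebraic (Algebra.adjoin k s) x :=
  isAlgebraic_algebraMap (⟨x, Algebra.subset_adjoin hx⟩ : Algebra.adjoin k s)

theorem eRk_range_lt_of_not_algebraicIndependent [Finite ι] {z : ι → L}
    (hz : ¬ AlgebraicIndependent k z) :
    (AlgebraicIndependent.matroid k L).eRk (Set.range z) < ENat.card ι := by
  contrapose! hz
  have card_le : ENat.card ι ≤ (Set.range z).encard := hz.trans (Matroid.eRk_le_encard _ _)
  have hrange : (Set.range z).encard ≤ ENat.card ι := by
    simpa [Set.encard_univ] using Set.encard_image_le z Set.univ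
  have indep : (AlgebraicIndependent.matroid k L).Indep (Set.range z) :=
    (Matroid.isRkFinite_of_finite _ (Set.finite_range z)).indep_of_encard_le_eRk (hrange.trans hz)
  have inj : Function.Injective z := by
    rw [← Set.injOn_univ]
    refine Set.finite_univ.injOn_of_encard_image_eq ?_
    rw [Set.image_univ, Set.encard_univ]
    exact hrange.antisymm card_le
  exact (algebraicIndependent_subtype_range inj).1 (AlgebraicIndependent.matroid_indep_iff.1 indep)

theorem isAlgebraic_adjoin_range_of_exchange [Finite ι] {m z : ι → L} {c : L}
    (hm : AlgebraicIndependent k m) (hz : ¬ AlgebraicIndependent k z)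
    (hmz : ∀ i, IsAlgebraic (Algebra.adjoin k (insert c (Set.range z))) (m i)) {x : L}
    (hx : x ∈ insert c (Set.range z)) : IsAlgebraic (Algebra.adjoin k (Set.range m)) x := by
  let M := AlgebraicIndependent.matroid k L
  have range_subset : Set.range m ⊆ M.closure (insert c (Set.range z)) :=
    Set.range_subset_iff.2 fun i => mem_closure_matroid_iff.2 (hmz i)
  have eRk_range : M.eRk (Set.range m) = ENat.card ι := by
    rw [(AlgebraicIndependent.matroid_indep_iff.2 hm.coe_range).eRk_eq_encard, ← Set.image_univ,
      hm.injective.encard_image, Set.encard_univ]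
  have eRk_le : M.eRk (M.closure (insert c (Set.range z))) ≤ M.eRk (Set.range m) := by
    rw [M.eRk_closure_eq, eRk_range]
    exact (M.eRk_insert_le_add_one _ _).trans
      (Order.add_one_le_of_lt (eRk_range_lt_of_not_algebraicIndependent hz))
  have closure_eq : M.closure (Set.range m) = M.closure (insert c (Set.range z)) := by
    simpa using (M.isRkFinite_of_finite
      (Set.finite_range m)).closure_eq_closure_of_subset_of_eRk_ge_eRk range_subset eRk_le
  rw [← mem_closure_matroid_iff, closure_eq, mem_closure_matroid_iff]
  exact isAlgebraic_adjoin_of_mem hx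

end Transcendence

section GenericFiniteness

theorem exists_eval₂_aeval_eq_zero_of_isAlgebraic {R A τ : Type*} [CommRing R] [CommRing A]
    [Algebra R A] {y : τ → A} {a : A}
    (ha : IsAlgebraic (Algebra.adjoin R (Set.range y)) a) :
    ∃ c : Polynomial (MvPolynomial τ R), c ≠ 0 ∧ c.eval₂ (aeval (R := R) y).toRingHom a = 0 := by
  obtain ⟨p, hp, hpa⟩ := ha
  let π : MvPolynomial τ R →ₐ[R] Algebra.adjoin R (Set.range y) :=
    (aeval y).codRestrict _ fun f => by
      rw [Algebra.adjoin_range_eq_range_aeval]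
      exact ⟨f, rfl⟩
  have π_surjective : Function.Surjective π := by
    rintro ⟨b, hb⟩
    obtain ⟨f, hf⟩ := Algebra.adjoin_range_eq_range_aeval R y ▸ hb
    exact ⟨f, Subtype.ext hf⟩
  obtain ⟨c, rfl⟩ := Polynomial.map_surjective (π : MvPolynomial τ R →+* _) π_surjective p
  refine ⟨c, by rintro rfl; simp at hp, ?_⟩
  rwa [Polynomial.aeval_def, Polynomial.eval₂_map] at hpa

theorem exists_ne_zero_forall_finite_roots {k σ τ : Type*} [Field k] [Finite σ]
    {c : σ → Polynomial (MvPolynomial τ k)} (hc : ∀ s, c s ≠ 0) :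
    ∃ f : MvPolynomial τ k, f ≠ 0 ∧ ∀ m, eval m f ≠ 0 →
      {x : σ → k | ∀ s, (c s).eval₂ (eval m) (x s) = 0}.Finite := by
  classical
  have := Fintype.ofFinite σ
  refine ⟨∏ s, (c s).leadingCoeff,
    Finset.prod_ne_zero_iff.2 fun s _ => Polynomial.leadingCoeff_ne_zero.2 (hc s), fun m hm => ?_⟩
  rw [map_prod, Finset.prod_ne_zero_iff] at hm
  have map_ne_zero (s : σ) : (c s).map (eval m) ≠ 0 := fun h =>
    hm s (Finset.mem_univ s) (by simpa using congrArg (·.coeff (c s).natDegree) h)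
  refine (Set.Finite.pi' fun s => ((c s).map (eval m)).roots.toFinset.finite_toSet).subset
    fun x hx s => ?_
  simpa [map_ne_zero s, Polynomial.eval_map] using hx s

variable {k σ τ : Type*} [Field k]

/-- The coordinates of the generic point of the irreducible affine variety defined by the prime
ideal `q`, with values in the function field of that variety. -/
noncomputable def genericCoord (q : Ideal (MvPolynomial σ k)) [q.IsPrime] (s : σ) :
    q.ResidueField :=
  algebraMap (MvPolynomial σ k) q.ResidueField (X s)

theorem aeval_genericCoord_eq_zero_iff {q : Ideal (MvPolynomial σ k)} [q.IsPrime]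
    {f : MvPolynomial σ k} : aeval (genericCoord q) f = 0 ↔ f ∈ q := by
  have aeval_eq : aeval (R := k) (genericCoord q) =
      IsScalarTower.toAlgHom k (MvPolynomial σ k) q.ResidueField := by
    ext s
    simp [genericCoord]
  rw [aeval_eq]
  exact Ideal.algebraMap_residueField_eq_zero

theorem aeval_eval₂_rename_X (ι : τ → σ) (c : Polynomial (MvPolynomial τ k)) (s : σ) {A : Type*}
    [CommRing A] [Algebra k A] (x : σ → A) :
    aeval x (c.eval₂ (rename (R := k) ι).toRingHom (X s)) =
      c.eval₂ (aeval (R := k) (x ∘ ι)).toRingHom (x s) := by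
  have comp_eq : (aeval (R := k) x).toRingHom.comp (rename ι).toRingHom =
      (aeval (x ∘ ι)).toRingHom := RingHom.ext fun f => aeval_rename ι x f
  rw [← comp_eq]
  simpa using Polynomial.hom_eval₂ c (rename (R := k) ι).toRingHom (aeval x).toRingHom (X s)

theorem exists_ne_zero_forall_finite_fiber_of_isAlgebraic [Finite σ] (ι : τ → σ)
    (q : Ideal (MvPolynomial σ k)) [q.IsPrime]
    (alg : ∀ s,
      IsAlgebraic (Algebra.adjoin k (Set.range (genericCoord q ∘ ι))) (genericCoord q s)) :
    ∃ f : MvPolynomial τ k, f ≠ 0 ∧ ∀ m, eval m f ≠ 0 →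
      {x : σ → k | (∀ h ∈ q, eval x h = 0) ∧ x ∘ ι = m}.Finite := by
  choose c hc root using fun s => exists_eval₂_aeval_eq_zero_of_isAlgebraic (alg s)
  obtain ⟨f, hf, finite_roots⟩ := exists_ne_zero_forall_finite_roots hc
  refine ⟨f, hf, fun m hm => (finite_roots m hm).subset ?_⟩
  rintro x ⟨hx, rfl⟩ s
  have mem : (c s).eval₂ (rename (R := k) ι).toRingHom (X s) ∈ q := by
    rw [← aeval_genericCoord_eq_zero_iff, aeval_eval₂_rename_X]
    exact root s
  exact (aeval_eval₂_rename_X ι (c s) s x).symm.trans (hx _ mem)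

theorem exists_ne_zero_eval_eq_zero_of_not_algebraicIndependent (ι : τ → σ)
    (q : Ideal (MvPolynomial σ k)) [q.IsPrime]
    (dep : ¬ AlgebraicIndependent k (genericCoord q ∘ ι)) :
    ∃ f : MvPolynomial τ k, f ≠ 0 ∧ ∀ x : σ → k, (∀ h ∈ q, eval x h = 0) →
      eval (x ∘ ι) f = 0 := by
  rw [algebraicIndependent_iff] at dep
  push Not at dep
  obtain ⟨f, hfq, hf⟩ := dep
  refine ⟨f, hf, fun x hx => ?_⟩
  have mem : rename ι f ∈ q := by rwa [← aeval_genericCoord_eq_zero_iff, aeval_rename]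
  rw [← eval_rename]
  exact hx _ mem

theorem exists_ne_zero_forall_finite_fiber_of_isPrime [Finite σ] {δ : Type*}
    (g : δ → MvPolynomial σ k) (ι : τ → σ) (q : Ideal (MvPolynomial σ k)) [q.IsPrime]
    (alg : (∃ t, aeval (genericCoord q) (g t) ≠ 0) →
      AlgebraicIndependent k (genericCoord q ∘ ι) →
      ∀ s, IsAlgebraic (Algebra.adjoin k (Set.range (genericCoord q ∘ ι))) (genericCoord q s)) :
    ∃ f : MvPolynomial τ k, f ≠ 0 ∧ ∀ m, eval m f ≠ 0 →
      {x : σ → k | (∀ h ∈ q, eval x h = 0) ∧ (∃ t, eval x (g t) ≠ 0) ∧ x ∘ ι = m}.Finite := by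
  by_cases hg : ∃ t, aeval (genericCoord q) (g t) ≠ 0
  · by_cases hι : AlgebraicIndependent k (genericCoord q ∘ ι)
    · obtain ⟨f, hf, finite⟩ :=
        exists_ne_zero_forall_finite_fiber_of_isAlgebraic ι q (alg hg hι)
      exact ⟨f, hf, fun m hm => (finite m hm).subset fun x hx => ⟨hx.1, hx.2.2⟩⟩
    · obtain ⟨f, hf, eval_eq_zero⟩ :=
        exists_ne_zero_eval_eq_zero_of_not_algebraicIndependent ι q hι
      refine ⟨f, hf, fun m hm => Set.finite_empty.subset ?_⟩
      rintro x ⟨hx, -, rfl⟩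
      exact hm (eval_eq_zero x hx)
  · push Not at hg
    refine ⟨1, one_ne_zero, fun m _ => Set.finite_empty.subset ?_⟩
    rintro x ⟨hx, ⟨t, ht⟩, -⟩
    exact ht (hx _ (aeval_genericCoord_eq_zero_iff.1 (hg t)))

theorem exists_ne_zero_forall_finite_fiber [Finite σ] {ε δ : Type*} (p : ε → MvPolynomial σ k)
    (g : δ → MvPolynomial σ k) (ι : τ → σ)
    (alg : ∀ (q : Ideal (MvPolynomial σ k)) [q.IsPrime],
      (∀ e, aeval (genericCoord q) (p e) = 0) → (∃ t, aeval (genericCoord q) (g t) ≠ 0) →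
      AlgebraicIndependent k (genericCoord q ∘ ι) →
      ∀ s, IsAlgebraic (Algebra.adjoin k (Set.range (genericCoord q ∘ ι))) (genericCoord q s)) :
    ∃ f : MvPolynomial τ k, f ≠ 0 ∧ ∀ m, eval m f ≠ 0 →
      {x : σ → k | (∀ e, eval x (p e) = 0) ∧ (∃ t, eval x (g t) ≠ 0) ∧ x ∘ ι = m}.Finite := by
  let I := Ideal.span (Set.range p)
  have finite_component (q : I.minimalPrimes) : ∃ f : MvPolynomial τ k, f ≠ 0 ∧
      ∀ m, eval m f ≠ 0 → {x : σ → k | (∀ h ∈ q.1, eval x h = 0) ∧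
        (∃ t, eval x (g t) ≠ 0) ∧ x ∘ ι = m}.Finite := by
    have : q.1.IsPrime := q.2.1.1
    exact exists_ne_zero_forall_finite_fiber_of_isPrime g ι q <| alg q fun e =>
      aeval_genericCoord_eq_zero_iff.2 (q.2.1.2 (Ideal.subset_span ⟨e, rfl⟩))
  choose f hf finite using finite_component
  have := (Ideal.finite_minimalPrimes_of_isNoetherianRing _ I).fintype
  refine ⟨∏ q, f q, Finset.prod_ne_zero_iff.2 fun q _ => hf q, fun m hm => ?_⟩
  rw [map_prod, Finset.prod_ne_zero_iff] at hm
  refine (Set.finite_iUnion fun q => finite q m (hm q (Finset.mem_univ q))).subset ?_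
  rintro x ⟨hp, hgx⟩
  have : (RingHom.ker (eval x)).IsPrime := RingHom.ker_isPrime _
  have I_le : I ≤ RingHom.ker (eval x) := Ideal.span_le.2 (Set.range_subset_iff.2 hp)
  obtain ⟨q, hq, q_le⟩ := Ideal.exists_minimalPrimes_le I_le
  exact Set.mem_iUnion.2 ⟨⟨q, hq⟩, fun h hh => q_le hh, hgx⟩

end GenericFiniteness

section Configurations

variable {n : ℕ} {K K' : Type*} [CommRing K] [CommRing K']

/-- The mutual distance `r_{ij}` for an arbitrary ordered pair `(i, j)`, with value `0` on the
diagonal. Over `ℂ` this is `rC`. -/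
def edge (r : PairIdx n → K) (i j : Fin n) : K :=
  if h : i < j then r ⟨(i, j), h⟩ else if h' : j < i then r ⟨(j, i), h'⟩ else 0

/-- The Cayley–Menger matrix of the squared distances, over any commutative ring. Over `ℂ` this is
`cmOf`. -/
def cayleyMenger (r : PairIdx n → K) : Matrix (Fin (n + 1)) (Fin (n + 1)) K :=
  Matrix.of fun i j =>
    Fin.cases (Fin.cases 0 (fun _ => 1) j)
      (fun i' => Fin.cases 1 (fun j' => edge r i' j' ^ 2) j) i

/-- The relation `g^a_{ij}` between the distance `r_{ij}` and the coordinates `z_i`, `z_j`, with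
`c2 = 2a`. Over `ℂ` this is `gEval`. -/
def pairRelation (c2 : ℤ) (r : PairIdx n → K) (z : Fin n → K) (p : PairIdx n) : K :=
  if 0 < c2 then r p ^ c2.toNat - 1 - z p.1.1 * z p.1.2
  else r p ^ (-c2).toNat * (z p.1.1 * z p.1.2 + 1) - 1

/-- The power product of distances that multiplies `(∂F/∂R_{ij}) Z_j` in `Ψ^a_i`, with
`c2 = 2a`. -/
def psiWeight (c2 : ℤ) (r : PairIdx n → K) (i j : Fin n) : K :=
  if c2 < 0 then edge r i j ^ (1 - c2).toNat
  else ∏ p ∈ Finset.univ.filter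
    (fun p : PairIdx n => ¬((p.1.1 = i ∧ p.1.2 = j) ∨ (p.1.1 = j ∧ p.1.2 = i))),
    r p ^ (c2 - 1).toNat

/-- `Ψ^a_i` with `c2 = 2a`, where `∂F/∂R_{ij}` is written out as `4 R_{ij}` times a cofactor of the
Cayley–Menger matrix. Over `ℂ` this is `Psi`. -/
def psi (c2 : ℤ) (r : PairIdx n → K) (z : Fin n → K) (i : Fin n) : K :=
  ∑ j, psiWeight c2 r i j * (4 * edge r i j * (cayleyMenger r).adjugate i.succ j.succ) * z j

section Symmetry

variable (r : PairIdx n → K)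

theorem edge_comm (i j : Fin n) : edge r i j = edge r j i := by
  rcases lt_trichotomy i j with h | rfl | h
  · simp [edge, h, h.not_gt]
  · rfl
  · simp [edge, h, h.not_gt]

theorem edge_self (i : Fin n) : edge r i i = 0 := by simp [edge]

theorem cayleyMenger_transpose : (cayleyMenger r).transpose = cayleyMenger r := by
  ext i j
  refine Fin.cases ?_ (fun i => ?_) i <;> refine Fin.cases ?_ (fun j => ?_) j <;>
    simp [cayleyMenger, edge_comm r]

theorem adjugate_cayleyMenger_comm (i j : Fin (n + 1)) :
    (cayleyMenger r).adjugate i j = (cayleyMenger r).adjugate j i := by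
  conv_lhs => rw [← cayleyMenger_transpose, ← Matrix.adjugate_transpose]
  rfl

theorem psiWeight_comm (c2 : ℤ) (i j : Fin n) : psiWeight c2 r i j = psiWeight c2 r j i := by
  simp only [psiWeight, edge_comm r i j, or_comm]

end Symmetry

section Map

variable (f : K →+* K') (r : PairIdx n → K)

theorem map_edge (i j : Fin n) : f (edge r i j) = edge (f ∘ r) i j := by
  unfold edge
  split_ifs <;> simp

theorem mapMatrix_cayleyMenger : f.mapMatrix (cayleyMenger r) = cayleyMenger (f ∘ r) := by
  ext i j
  refine Fin.cases ?_ (fun i => ?_) i <;> refine Fin.cases ?_ (fun j => ?_) j <;>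
    simp [cayleyMenger, map_edge]

theorem map_det_cayleyMenger : f (cayleyMenger r).det = (cayleyMenger (f ∘ r)).det := by
  rw [RingHom.map_det, mapMatrix_cayleyMenger]

theorem map_adjugate_cayleyMenger (i j : Fin (n + 1)) :
    f ((cayleyMenger r).adjugate i j) = (cayleyMenger (f ∘ r)).adjugate i j := by
  rw [← mapMatrix_cayleyMenger, ← RingHom.map_adjugate]
  rfl

theorem map_pairRelation (c2 : ℤ) (z : Fin n → K) (p : PairIdx n) :
    f (pairRelation c2 r z p) = pairRelation c2 (f ∘ r) (f ∘ z) p := by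
  unfold pairRelation
  split_ifs <;> simp

theorem map_psiWeight (c2 : ℤ) (i j : Fin n) :
    f (psiWeight c2 r i j) = psiWeight c2 (f ∘ r) i j := by
  unfold psiWeight
  split_ifs <;> simp [map_edge]

theorem map_psi (c2 : ℤ) (z : Fin n → K) (i : Fin n) :
    f (psi c2 r z i) = psi c2 (f ∘ r) (f ∘ z) i := by
  simp [psi, map_psiWeight, map_edge, map_adjugate_cayleyMenger, map_ofNat f 4]

end Map

section Derivation

variable {k : Type*} [CommRing k] [Algebra k K] (D : Derivation k K K) {r : PairIdx n → K}
  {z : Fin n → K} {c2 : ℤ}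

theorem derivation_det_cayleyMenger (r : PairIdx n → K) :
    D (cayleyMenger r).det = ∑ i : Fin n, ∑ j : Fin n,
      (cayleyMenger r).adjugate i.succ j.succ * (2 * edge r i j * D (edge r i j)) := by
  have D_sq (i j : Fin n) :
      D (cayleyMenger r j.succ i.succ) = 2 * edge r i j * D (edge r i j) := by
    simp [cayleyMenger, edge_comm r j i, Derivation.leibniz_pow, mul_assoc]
  have D_border (i : Fin n) :
      D (cayleyMenger r 0 i.succ) = 0 ∧ D (cayleyMenger r i.succ 0) = 0 := by
    simp [cayleyMenger]
  have D_corner : D (cayleyMenger r 0 0) = 0 := by simp [cayleyMenger]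
  simp [derivation_det, Fin.sum_univ_succ, D_sq, D_border, D_corner]

theorem edge_pow_eq_of_pos (hc2 : 0 < c2) (hg : ∀ p, pairRelation c2 r z p = 0) {i j : Fin n}
    (hij : i ≠ j) : edge r i j ^ c2.toNat = z i * z j + 1 := by
  wlog h : i < j generalizing i j
  · rw [edge_comm, mul_comm]
    exact this hij.symm (hij.lt_or_gt.resolve_left h)
  · have := hg ⟨(i, j), h⟩
    simp only [pairRelation, if_pos hc2] at this
    simp only [edge, dif_pos h]
    linear_combination this

theorem edge_pow_mul_eq_one_of_neg (hc2 : c2 < 0) (hg : ∀ p, pairRelation c2 r z p = 0)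
    {i j : Fin n} (hij : i ≠ j) : edge r i j ^ (-c2).toNat * (z i * z j + 1) = 1 := by
  wlog h : i < j generalizing i j
  · rw [edge_comm, mul_comm (z i)]
    exact this hij.symm (hij.lt_or_gt.resolve_left h)
  · have := hg ⟨(i, j), h⟩
    simp only [pairRelation, if_neg hc2.not_gt] at this
    simp only [edge, dif_pos h]
    linear_combination this

theorem prod_pow_eq_edge_pow_mul_psiWeight (hc2 : 0 < c2) (r : PairIdx n → K) {i j : Fin n}
    (hij : i ≠ j) :
    ∏ p, r p ^ (c2 - 1).toNat = edge r i j ^ (c2 - 1).toNat * psiWeight c2 r i j := by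
  wlog h : i < j generalizing i j
  · rw [edge_comm, psiWeight_comm]
    exact this hij.symm (hij.lt_or_gt.resolve_left h)
  · have filter_eq : Finset.univ.filter (fun p : PairIdx n =>
        ¬((p.1.1 = i ∧ p.1.2 = j) ∨ (p.1.1 = j ∧ p.1.2 = i))) = Finset.univ.erase ⟨(i, j), h⟩ := by
      ext ⟨⟨a, b⟩, hab⟩
      simp only [Finset.mem_filter, Finset.mem_univ, true_and, Finset.mem_erase, and_true, ne_eq,
        Subtype.mk.injEq, Prod.mk.injEq]
      grind
    rw [psiWeight, if_neg hc2.not_gt, filter_eq, edge, dif_pos h]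
    exact (Finset.mul_prod_erase Finset.univ _ (Finset.mem_univ _)).symm

theorem mul_derivation_edge_of_neg (hc2 : c2 < 0) (hg : ∀ p, pairRelation c2 r z p = 0)
    {i j : Fin n} (hij : i ≠ j) :
    c2 * D (edge r i j) = psiWeight c2 r i j * D (z i * z j) := by
  obtain ⟨c, rfl⟩ : ∃ c : ℕ, c2 = -((c : ℤ) + 1) := ⟨(-c2 - 1).toNat, by lia⟩
  have exponent : (-(-((c : ℤ) + 1))).toNat = c + 1 := by lia
  have weight_exponent : (1 - -((c : ℤ) + 1)).toNat = c + 2 := by lia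
  have relation := edge_pow_mul_eq_one_of_neg hc2 hg hij
  rw [exponent] at relation
  have D_relation := congrArg D relation
  rw [Derivation.leibniz, Derivation.leibniz_pow, map_add, Derivation.map_one_eq_zero,
    add_zero] at D_relation
  simp only [smul_eq_mul, nsmul_eq_mul, Nat.add_sub_cancel] at D_relation
  rw [psiWeight, if_pos hc2, weight_exponent]
  push_cast at D_relation ⊢
  linear_combination ((c + 1) * D (edge r i j)) * relation - edge r i j * D_relation

theorem mul_derivation_edge_of_pos (hc2 : 0 < c2) (hg : ∀ p, pairRelation c2 r z p = 0)
    {i j : Fin n} (hij : i ≠ j) :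
    c2 * (∏ p, r p ^ (c2 - 1).toNat) * D (edge r i j) = psiWeight c2 r i j * D (z i * z j) := by
  rw [prod_pow_eq_edge_pow_mul_psiWeight hc2 r hij]
  obtain ⟨c, rfl⟩ : ∃ c : ℕ, c2 = (c : ℤ) + 1 := ⟨(c2 - 1).toNat, by lia⟩
  have D_relation := congrArg D (edge_pow_eq_of_pos hc2 hg hij)
  rw [Derivation.leibniz_pow, map_add, Derivation.map_one_eq_zero, add_zero] at D_relation
  simp only [smul_eq_mul, nsmul_eq_mul, Int.toNat_natCast_add_one, Nat.add_sub_cancel]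
    at D_relation
  rw [add_sub_cancel_right, Int.toNat_natCast]
  push_cast at D_relation ⊢
  linear_combination psiWeight (c + 1) r i j * D_relation

theorem exists_mul_derivation_edge_eq (hc2 : c2 ≠ 0) (hg : ∀ p, pairRelation c2 r z p = 0) :
    ∃ C : K, ∀ i j, i ≠ j → C * D (edge r i j) = psiWeight c2 r i j * D (z i * z j) := by
  rcases hc2.lt_or_gt with h | h
  · exact ⟨_, fun _ _ => mul_derivation_edge_of_neg D h hg⟩
  · exact ⟨_, fun _ _ => mul_derivation_edge_of_pos D h hg⟩

/-- Up to a factor, `Ψ^a_i` is the `i`-th partial derivative of the Cayley–Menger determinant,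
viewed as a function of `z` through the pair relations. -/
theorem exists_mul_derivation_det_eq_sum_psi (hc2 : c2 ≠ 0)
    (hg : ∀ p, pairRelation c2 r z p = 0) :
    ∃ C : K, C * D (cayleyMenger r).det = ∑ i, psi c2 r z i * D (z i) := by
  obtain ⟨C, hC⟩ := exists_mul_derivation_edge_eq D hc2 hg
  refine ⟨C, ?_⟩
  let B (i j : Fin n) : K :=
    psiWeight c2 r i j * (2 * edge r i j * (cayleyMenger r).adjugate i.succ j.succ)
  have B_comm (i j : Fin n) : B i j = B j i := by
    simp only [B, psiWeight_comm r c2 i j, edge_comm r i j,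
      adjugate_cayleyMenger_comm r i.succ j.succ]
  have term_eq (i j : Fin n) :
      C * ((cayleyMenger r).adjugate i.succ j.succ * (2 * edge r i j * D (edge r i j))) =
        B i j * (z i * D (z j)) + B i j * (z j * D (z i)) := by
    rcases eq_or_ne i j with rfl | hij
    · simp [B, edge_self]
    · have := hC i j hij
      rw [Derivation.leibniz, smul_eq_mul, smul_eq_mul] at this
      linear_combination (2 * edge r i j * (cayleyMenger r).adjugate i.succ j.succ) * this
  have swap : ∑ i, ∑ j, B i j * (z i * D (z j)) = ∑ i, ∑ j, B i j * (z j * D (z i)) := by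
    rw [Finset.sum_comm]
    simp only [B_comm]
  simp only [derivation_det_cayleyMenger, Finset.mul_sum, term_eq, Finset.sum_add_distrib, swap]
  simp only [← Finset.sum_add_distrib, psi, Finset.sum_mul]
  refine Finset.sum_congr rfl fun i _ => Finset.sum_congr rfl fun j _ => ?_
  ring

theorem psi_eq_zero_of_derivation (hc2 : c2 ≠ 0) (hg : ∀ p, pairRelation c2 r z p = 0)
    (hr : (cayleyMenger r).det = 0) {i : Fin n}
    (hD : ∀ j, D (z j) = (Pi.single i 1 : Fin n → K) j) :
    psi c2 r z i = 0 := by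
  obtain ⟨C, hC⟩ := exists_mul_derivation_det_eq_sum_psi D hc2 hg
  simpa [hr, hD, Pi.single_apply] using hC.symm

end Derivation

section KernelVector

/-- The vector `(d, m_1 z_1, …, m_n z_n)`, whose image under the Cayley–Menger matrix is
`(Γ_0, …, Γ_n)`. -/
def kernelVector (d : K) (m z : Fin n → K) : Fin (n + 1) → K := Fin.cons d fun j => m j * z j

variable {L : Type*} [Field L] {r : PairIdx n → L} {z m : Fin n → L} {d : L} {c2 : ℤ} {i : Fin n}

/-- If `z_i = 0`, then coordinate `i` of the kernel vector vanishes, hence so does a whole row of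
the adjugate, and `Ψ_i` is a combination of the entries of that row. -/
theorem z_ne_zero_of_psi_ne_zero (hr : (cayleyMenger r).det = 0)
    (hker : (cayleyMenger r).mulVec (kernelVector d m z) = 0) (hm : ∀ j, m j ≠ 0)
    (hi : psi c2 r z i ≠ 0) : z i ≠ 0 := by
  obtain ⟨j, hj⟩ : ∃ j, z j ≠ 0 := by
    by_contra! hz
    exact hi (by simp [psi, hz])
  have vector_ne_zero : kernelVector d m z ≠ 0 := fun h => by
    simpa [kernelVector, hm, hj] using congrFun h j.succ
  intro hzi
  have row_eq_zero := adjugate_apply_eq_zero_of_mulVec_eq_zero hr hker vector_ne_zero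
    (i := i.succ) (by simp [kernelVector, hzi])
  exact hi (by simp [psi, row_eq_zero])

variable {k : Type*} [Field k] [CharZero k] [Algebra k L]

theorem not_algebraicIndependent_of_psi_ne_zero (hc2 : c2 ≠ 0)
    (hg : ∀ p, pairRelation c2 r z p = 0) (hr : (cayleyMenger r).det = 0) (hzi : z i ≠ 0)
    (hi : psi c2 r z i ≠ 0) : ¬ AlgebraicIndependent k fun j : {j // z j ≠ 0} => z j := by
  intro hz
  obtain ⟨D, hD⟩ := exists_derivation_apply_eq_of_algebraicIndependent hz
    fun j => (Pi.single i 1 : Fin n → L) j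
  refine hi (psi_eq_zero_of_derivation D hc2 hg hr fun j => ?_)
  by_cases hj : z j = 0
  · have hji : j ≠ i := fun h => hzi (h ▸ hj)
    simp [hj, hji]
  · exact hD ⟨j, hj⟩

theorem isAlgebraic_distance {R : Type*} [CommRing R] [IsDomain R] [Algebra R L] (hc2 : c2 ≠ 0)
    (hg : ∀ p, pairRelation c2 r z p = 0) (hz : ∀ j, IsAlgebraic R (z j)) (p : PairIdx n) :
    IsAlgebraic R (r p) := by
  have edge_eq : edge r p.1.1 p.1.2 = r p := by simp [edge, p.2]
  have relation_algebraic : IsAlgebraic R (z p.1.1 * z p.1.2 + 1) :=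
    ((hz _).mul (hz _)).add isAlgebraic_one
  rcases hc2.lt_or_gt with h | h
  · have relation := edge_pow_mul_eq_one_of_neg h hg p.2.ne
    rw [edge_eq] at relation
    exact .of_pow (n := (-c2).toNat) (by lia)
      (eq_inv_of_mul_eq_one_left relation ▸ relation_algebraic.inv)
  · have relation := edge_pow_eq_of_pos h hg p.2.ne
    rw [edge_eq] at relation
    exact .of_pow (n := c2.toNat) (by lia) (relation ▸ relation_algebraic)

theorem isAlgebraic_edge {R : Type*} [CommRing R] [IsDomain R] [Algebra R L]
    (hr : ∀ p, IsAlgebraic R (r p)) (i j : Fin n) : IsAlgebraic R (edge r i j) := by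
  unfold edge
  split_ifs
  exacts [hr _, hr _, isAlgebraic_zero]

theorem isAlgebraic_adjugate_cayleyMenger {R : Type*} [CommRing R] [IsDomain R] [Algebra R L]
    (hr : ∀ p, IsAlgebraic R (r p)) (i j : Fin (n + 1)) :
    IsAlgebraic R ((cayleyMenger r).adjugate i j) := by
  refine isAlgebraic_adjugate_apply (fun i j => ?_) i j
  refine Fin.cases ?_ (fun i => ?_) i <;> refine Fin.cases ?_ (fun j => ?_) j
  exacts [isAlgebraic_zero, isAlgebraic_one, isAlgebraic_one, (isAlgebraic_edge hr i j).pow 2]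

theorem isAlgebraic_adjoin_masses (hc2 : c2 ≠ 0) (hg : ∀ p, pairRelation c2 r z p = 0)
    (hr : (cayleyMenger r).det = 0) (hker : (cayleyMenger r).mulVec (kernelVector d m z) = 0)
    {a b : Fin (n + 1)} (hab : (cayleyMenger r).adjugate a b ≠ 0) (hi : psi c2 r z i ≠ 0)
    (hm : AlgebraicIndependent k m) :
    (∀ p, IsAlgebraic (Algebra.adjoin k (Set.range m)) (r p)) ∧
    (∀ j, IsAlgebraic (Algebra.adjoin k (Set.range m)) (z j)) ∧
    IsAlgebraic (Algebra.adjoin k (Set.range m)) d := by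
  obtain ⟨c, hc⟩ := exists_eq_mul_adjugate_of_mulVec_eq_zero hr hker hab
  let zNonzero : {j // z j ≠ 0} → L := fun j => z j
  let s : Set L := insert c (Set.range zNonzero)
  have c_algebraic : IsAlgebraic (Algebra.adjoin k s) c := isAlgebraic_adjoin_of_mem (Or.inl rfl)
  have z_algebraic (j : Fin n) : IsAlgebraic (Algebra.adjoin k s) (z j) := by
    by_cases hj : z j = 0
    · rw [hj]
      exact isAlgebraic_zero
    · exact isAlgebraic_adjoin_of_mem (Or.inr ⟨⟨j, hj⟩, rfl⟩)
  have distance_algebraic := isAlgebraic_distance hc2 hg z_algebraic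
  have vector_algebraic (l : Fin (n + 1)) :
      IsAlgebraic (Algebra.adjoin k s) (kernelVector d m z l) := by
    rw [hc l]
    exact c_algebraic.mul (isAlgebraic_adjugate_cayleyMenger distance_algebraic l b)
  have mass_algebraic (j : {j // z j ≠ 0}) : IsAlgebraic (Algebra.adjoin k s) (m j) := by
    have mass_eq : m j = kernelVector d m z (Fin.succ j) * (z j)⁻¹ := by
      simp [kernelVector, j.2]
    exact mass_eq ▸ (vector_algebraic _).mul (z_algebraic j).inv
  have zNonzero_dependent : ¬ AlgebraicIndependent k zNonzero :=
    not_algebraicIndependent_of_psi_ne_zero hc2 hg hr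
      (z_ne_zero_of_psi_ne_zero hr hker hm.ne_zero hi) hi
  have algebraic_over_masses (x : L) (hx : IsAlgebraic (Algebra.adjoin k s) x) :
      IsAlgebraic (Algebra.adjoin k (Set.range m)) x := by
    refine .adjoin_of_forall_isAlgebraic (fun y hy => ?_) hx
    refine IsAlgebraic.adjoin_of_forall_isAlgebraic (fun w hw => ?_)
      (isAlgebraic_adjoin_range_of_exchange (hm.comp _ Subtype.val_injective) zNonzero_dependent
        mass_algebraic hy.1)
    exact (hw.2 (Set.range_comp_subset_range _ _ hw.1)).elim
  exact ⟨fun p => algebraic_over_masses _ (distance_algebraic p),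
    fun j => algebraic_over_masses _ (z_algebraic j),
    algebraic_over_masses _ (vector_algebraic 0)⟩

end KernelVector

section Equations

variable (c2 : ℤ)

/-- The coordinates `r` of a point. Over `ℂ` this is `rPart`. -/
def distances (x : TVar n → K) (p : PairIdx n) : K := x (Sum.inl p)

/-- The coordinates `z` of a point. Over `ℂ` this is `zPart`. -/
def zCoords (x : TVar n → K) (i : Fin n) : K := x (Sum.inr (Sum.inl i))

/-- The coordinate `Δ_0` of a point. Over `ℂ` this is `dPart`. -/
def delta (x : TVar n → K) : K := x (Sum.inr (Sum.inr (Sum.inl ())))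

/-- The coordinates `m` of a point. Over `ℂ` this is `mPart`. -/
def masses (x : TVar n → K) (i : Fin n) : K := x (Sum.inr (Sum.inr (Sum.inr i)))

/-- The left-hand sides of the equations `g^a_{ij} = 0`, `F = 0` and `Γ_l = 0` that define `Ṽ^a`,
with `c2 = 2a`. -/
def equation (x : TVar n → K) : PairIdx n ⊕ Unit ⊕ Fin (n + 1) → K
  | .inl p => pairRelation c2 (distances x) (zCoords x) p
  | .inr (.inl _) => (cayleyMenger (distances x)).det
  | .inr (.inr l) =>
    (cayleyMenger (distances x)).mulVec (kernelVector (delta x) (masses x) (zCoords x)) l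

/-- The products `F_{ab} Ψ^a_i`; they have a nonzero member exactly away from `W_2 ∪ W_3^a`. -/
def nondegeneracy (x : TVar n → K) (t : (Fin (n + 1) × Fin (n + 1)) × Fin n) : K :=
  (cayleyMenger (distances x)).adjugate t.1.1 t.1.2 * psi c2 (distances x) (zCoords x) t.2

variable {c2} in
theorem isAlgebraic_adjoin_range_masses {k L : Type*} [Field k] [CharZero k] [Field L]
    [Algebra k L] (hc2 : c2 ≠ 0) {x : TVar n → L} (equations : ∀ e, equation c2 x e = 0)
    (nondegenerate : ∃ t, nondegeneracy c2 x t ≠ 0) (hm : AlgebraicIndependent k (masses x))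
    (s : TVar n) : IsAlgebraic (Algebra.adjoin k (Set.range (masses x))) (x s) := by
  obtain ⟨t, ht⟩ := nondegenerate
  obtain ⟨distance_algebraic, z_algebraic, delta_algebraic⟩ := isAlgebraic_adjoin_masses hc2
    (fun p => equations (.inl p)) (equations (.inr (.inl ())))
    (funext fun l => equations (.inr (.inr l))) (left_ne_zero_of_mul ht) (right_ne_zero_of_mul ht)
    hm
  rcases s with p | i | - | i
  exacts [distance_algebraic p, z_algebraic i, delta_algebraic, isAlgebraic_adjoin_of_mem ⟨i, rfl⟩]

theorem map_equation (f : K →+* K') (x : TVar n → K) (e : PairIdx n ⊕ Unit ⊕ Fin (n + 1)) :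
    f (equation c2 x e) = equation c2 (f ∘ x) e := by
  rcases e with p | - | l
  · exact map_pairRelation f _ c2 _ p
  · exact map_det_cayleyMenger f _
  · have map_vector : f ∘ kernelVector (delta x) (masses x) (zCoords x) =
        kernelVector (delta (f ∘ x)) (masses (f ∘ x)) (zCoords (f ∘ x)) := by
      funext l
      refine Fin.cases ?_ (fun j => ?_) l <;> simp [kernelVector, delta, masses, zCoords]
    simp only [equation]
    rw [RingHom.map_mulVec, map_vector, ← RingHom.mapMatrix_apply, mapMatrix_cayleyMenger]
    rfl

theorem map_nondegeneracy (f : K →+* K') (x : TVar n → K)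
    (t : (Fin (n + 1) × Fin (n + 1)) × Fin n) :
    f (nondegeneracy c2 x t) = nondegeneracy c2 (f ∘ x) t := by
  simp only [nondegeneracy, map_mul, map_adjugate_cayleyMenger, map_psi]
  rfl

section Aeval

variable {k : Type*} [CommRing k] [Algebra k K] (x : TVar n → K)

theorem aeval_comp_X : (aeval (R := k) x : MvPolynomial (TVar n) k →+* K) ∘ X = x :=
  funext fun s => aeval_X x s

theorem aeval_equation_X (e : PairIdx n ⊕ Unit ⊕ Fin (n + 1)) :
    aeval (R := k) x (equation c2 X e) = equation c2 x e := by
  conv_rhs => rw [← aeval_comp_X (k := k) x]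
  exact map_equation c2 (aeval (R := k) x : MvPolynomial (TVar n) k →+* K) X e

theorem aeval_nondegeneracy_X (t : (Fin (n + 1) × Fin (n + 1)) × Fin n) :
    aeval (R := k) x (nondegeneracy c2 X t) = nondegeneracy c2 x t := by
  conv_rhs => rw [← aeval_comp_X (k := k) x]
  exact map_nondegeneracy c2 (aeval (R := k) x : MvPolynomial (TVar n) k →+* K) X t

end Aeval

end Equations

end Configurations

/-- The points of `Ṽ^a` outside `W_2 ∪ W_3^a` with coordinates in `k`, where `c2 = 2a`. Collisions,
that is, points of `W_1`, are allowed. -/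
def nondegeneratePoints (k : Type*) [CommRing k] (n : ℕ) (c2 : ℤ) : Set (TVar n → k) :=
  {x | (∀ e, equation c2 x e = 0) ∧ ∃ t, nondegeneracy c2 x t ≠ 0}

section Complex

variable {n : ℕ}

theorem dF_comm (i j : Fin n) : dF i j = dF j i := by
  rcases lt_trichotomy i j with h | rfl | h
  · simp [dF, h, h.not_gt]
  · rfl
  · simp [dF, h, h.not_gt]

theorem dF_eq (i j : Fin n) :
    dF i j = 4 * edge X i j * (cayleyMenger X).adjugate i.succ j.succ := by
  wlog h : i < j generalizing i j
  · rcases (not_lt.1 h).eq_or_lt with rfl | h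
    · simp [dF, edge_self]
    · rw [dF_comm, this j i h, edge_comm, adjugate_cayleyMenger_comm]
  have dF_eq_pderiv : dF i j = pderiv ⟨(i, j), h⟩ (cayleyMenger X).det := by
    rw [dF, dif_pos h]
    rfl
  have pderiv_edge (k l : Fin n) : pderiv (⟨(i, j), h⟩ : PairIdx n)
      (edge (X : PairIdx n → MvPolynomial (PairIdx n) ℂ) k l) =
      (if k = i then (if l = j then 1 else 0) else 0) +
      (if k = j then (if l = i then 1 else 0) else 0) := by
    unfold edge
    split_ifs <;> simp_all [pderiv_X, Subtype.ext_iff, Prod.ext_iff] <;> lia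
  rw [dF_eq_pderiv, derivation_det_cayleyMenger]
  simp only [pderiv_edge, mul_add, Finset.sum_add_distrib, mul_ite, mul_one, mul_zero,
    Finset.sum_ite_eq', Finset.sum_ite_irrel, Finset.sum_const_zero, Finset.mem_univ, if_true]
  rw [edge_comm X j i, adjugate_cayleyMenger_comm X j.succ i.succ]
  ring

theorem evalDF_eq (r : PairIdx n → ℂ) (i j : Fin n) :
    evalDF r i j = 4 * edge r i j * (cayleyMenger r).adjugate i.succ j.succ := by
  have eval_X_eq : ⇑(eval r) ∘ X = r := funext fun p => eval_X p
  rw [evalDF, dF_eq, map_mul, map_mul, map_edge, map_adjugate_cayleyMenger, eval_X_eq, map_ofNat]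

theorem Psi_eq_psi (c2 : ℤ) (r : PairIdx n → ℂ) (z : Fin n → ℂ) (i : Fin n) :
    Psi c2 r z i = psi c2 r z i := by
  have psi_eq_sum_sdiff : psi c2 r z i =
      ∑ j ∈ Finset.univ \ {i}, psiWeight c2 r i j * evalDF r i j * z j := by
    simp only [evalDF_eq, psi]
    refine (Finset.sum_subset (Finset.subset_univ _) fun j _ hj => ?_).symm
    obtain rfl : j = i := by simpa using hj
    simp [edge_self]
  rw [psi_eq_sum_sdiff]
  unfold Psi psiWeight
  split_ifs <;> rfl

theorem GammaEval_eq_mulVec (P : Pt n) (l : Fin (n + 1)) :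
    GammaEval P l =
      (cayleyMenger (distances P)).mulVec (kernelVector (delta P) (masses P) (zCoords P)) l := by
  refine Fin.cases ?_ (fun l => ?_) l
  · simp [GammaEval, Matrix.mulVec, dotProduct, Fin.sum_univ_succ, cayleyMenger, kernelVector,
      mPart, zPart, masses, zCoords]
  · simp only [GammaEval, Matrix.mulVec, dotProduct, Fin.sum_univ_succ, cayleyMenger, kernelVector,
      Matrix.of_apply, Fin.cases_zero, Fin.cases_succ, Fin.cons_zero, Fin.cons_succ, one_mul]
    congr 1
    refine Finset.sum_congr rfl fun j _ => ?_
    rw [edge_comm, mul_comm]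
    rfl

theorem Vset_subset_nondegeneratePoints (n : ℕ) (c2 : ℤ) :
    Vset n c2 ⊆ nondegeneratePoints ℂ n c2 := by
  rintro P ⟨⟨pair_relations, det_eq_zero, gamma_eq_zero⟩, hW⟩
  simp only [Set.mem_union, not_or, W2, W3, Set.mem_ofPred_eq, not_forall] at hW
  obtain ⟨⟨-, a, b, hab⟩, i, hi⟩ := hW
  refine ⟨?_, ((b, a), i), mul_ne_zero hab (Psi_eq_psi c2 _ _ i ▸ hi)⟩
  rintro (p | - | l)
  exacts [pair_relations p, det_eq_zero, (GammaEval_eq_mulVec P l).symm.trans (gamma_eq_zero l)]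

theorem isZClosed_setOf_eval_eq_zero {σ : Type} (f : MvPolynomial σ ℂ) :
    IsZClosed {x | eval x f = 0} :=
  ⟨{f}, by simp⟩

theorem setOf_eval_eq_zero_ne_univ {σ : Type*} {f : MvPolynomial σ ℂ} (hf : f ≠ 0) :
    {x | eval x f = 0} ≠ Set.univ := fun h =>
  hf (MvPolynomial.funext fun x => by simpa using Set.eq_univ_iff_forall.1 h x)

end Complex

theorem statement17_general {k : Type*} [Field k] [CharZero k] (n : ℕ) {c2 : ℤ} (hc2 : c2 ≠ 0) :
    ∃ f : MvPolynomial (Fin n) k, f ≠ 0 ∧ ∀ m, eval m f ≠ 0 →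
      {x | x ∈ nondegeneratePoints k n c2 ∧ masses x = m}.Finite := by
  obtain ⟨f, hf, finite⟩ := exists_ne_zero_forall_finite_fiber (k := k) (equation c2 X)
    (nondegeneracy c2 X) (fun i : Fin n => Sum.inr (Sum.inr (Sum.inr i)))
    fun q _ equations nondegenerate hm => by
      simp only [aeval_equation_X, aeval_nondegeneracy_X] at equations nondegenerate
      exact isAlgebraic_adjoin_range_masses hc2 equations nondegenerate hm
  simp only [← coe_aeval_eq_eval, RingHom.coe_coe, aeval_equation_X, aeval_nondegeneracy_X]
    at finite
  exact ⟨f, hf, fun m hm => (finite m hm).subset fun x hx => ⟨hx.1.1, hx.1.2, hx.2⟩⟩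

/-- Let `a` be a nonzero semi-integer (`c2 = 2a`) and let
`π : V^a → ℂ^n` be the projection onto the mass coordinates. Then there exists a proper
Zariski-closed subset `B̃ ⊊ ℂ^n` such that for every `m ∉ B̃` the fibre `π⁻¹(m)` is
finite. -/
theorem statement17 {n : ℕ} (hn : 3 ≤ n) (c2 : ℤ) (hc2 : c2 ≠ 0) :
    ∃ B : Set (Fin n → ℂ), IsZClosed B ∧ B ≠ Set.univ ∧
      ∀ m : Fin n → ℂ, m ∉ B →
        {P : Pt n | P ∈ Vset n c2 ∧ mPart P = m}.Finite := by
  obtain ⟨f, hf, finite⟩ := statement17_general (k := ℂ) n hc2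
  exact ⟨{m | eval m f = 0}, isZClosed_setOf_eval_eq_zero f, setOf_eval_eq_zero_ne_univ hf,
    fun m hm => (finite m hm).subset fun _ hP =>
      ⟨Vset_subset_nondegeneratePoints n c2 hP.1, hP.2⟩⟩
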